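/- Let F be a right Hilbert B-module, C a B-C*-algebra, and I ⊴ C an ideal. Then I is a B-C*-algebra, K(F ⊗_B I) is an ideal in K(F ⊗_B C), and the quotient K(F ⊗_B C)/K(F ⊗_B I) is isomorphic to K(F ⊗_B (C/I)); moreover (F ⊗_B C)/(F ⊗_B I) ≅ F ⊗_B (C/I) as right C/I-Hilbert modules via f ⊗ c + F⊗_B I ↦ f ⊗ (c + I). -/

import Mathlib

noncomputable section

open Filter Topology

universe u

/-- A bundled right Hilbert C*-module structure over a (possibly non-unital)
C*-algebra `B` on a complete normed complex vector space `X`.  The fields record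
the right `B`-action, the `B`-valued inner product, and their standard axioms,
including positivity of inner products and compatibility of the norm. -/
structure HilbertModule (B : Type u) (X : Type u)
    [NonUnitalCStarAlgebra B] [NormedAddCommGroup X] [NormedSpace ℂ X] [CompleteSpace X] :
    Type u where
  smulR : X → B → X
  inner : X → X → B
  smulR_add : ∀ (x : X) (b c : B), smulR x (b + c) = smulR x b + smulR x c
  add_smulR : ∀ (x y : X) (b : B), smulR (x + y) b = smulR x b + smulR y b
  smulR_mul : ∀ (x : X) (b c : B), smulR x (b * c) = smulR (smulR x b) c
  smulC_smulR : ∀ (c : ℂ) (x : X) (b : B), smulR (c • x) b = c • smulR x b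
  inner_add_left : ∀ x y z : X, inner (x + y) z = inner x z + inner y z
  inner_add_right : ∀ x y z : X, inner x (y + z) = inner x y + inner x z
  inner_smulR_right : ∀ (x y : X) (b : B), inner x (smulR y b) = inner x y * b
  inner_smulC_right : ∀ (c : ℂ) (x y : X), inner x (c • y) = c • inner x y
  star_inner : ∀ x y : X, star (inner x y) = inner y x
  inner_self_pos : ∀ x : X, ∃ b : B, inner x x = star b * b
  norm_inner_self : ∀ x : X, ‖x‖ ^ 2 = ‖inner x x‖

/-- `T : X → Y` and `S : Y → X` are mutually adjoint operators between
right Hilbert `B`-modules. -/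
def HilbertModule.IsAdjointPair {B X Y : Type u} [NonUnitalCStarAlgebra B]
    [NormedAddCommGroup X] [NormedSpace ℂ X] [CompleteSpace X]
    [NormedAddCommGroup Y] [NormedSpace ℂ Y] [CompleteSpace Y]
    (hX : HilbertModule B X) (hY : HilbertModule B Y)
    (T : X → Y) (S : Y → X) : Prop :=
  ∀ (x : X) (y : Y), hY.inner (T x) y = hX.inner x (S y)

/-- Positivity in a C*-algebra, expressed as being of the form `star c * c`. -/
def IsPositiveElem {B : Type u} [NonUnitalCStarAlgebra B] (b : B) : Prop :=
  ∃ c : B, b = star c * c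

/-- Positivity of a matrix over a C*-algebra. -/
def MatrixIsPositive {A : Type u} [NonUnitalCStarAlgebra A] {n : ℕ}
    (M : Matrix (Fin n) (Fin n) A) : Prop :=
  ∃ N : Matrix (Fin n) (Fin n) A, M = N.conjTranspose * N

/-- A sequential (the algebras in question are separable) approximate unit. -/
structure IsApproxUnit {A : Type u} [NonUnitalCStarAlgebra A] (e : ℕ → A) : Prop where
  pos : ∀ n, IsPositiveElem (e n)
  norm_le_one : ∀ n, ‖e n‖ ≤ 1
  tendsto_mul_left : ∀ a : A, Tendsto (fun n => e n * a) atTop (𝓝 a)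
  tendsto_mul_right : ∀ a : A, Tendsto (fun n => a * e n) atTop (𝓝 a)

/-- A completely positive map between C*-algebras: a linear map sending positive
matrices to positive matrices at every matrix level. -/
structure IsCPMap {A B : Type u} [NonUnitalCStarAlgebra A] [NonUnitalCStarAlgebra B]
    (ρ : A → B) : Prop where
  map_add : ∀ a a', ρ (a + a') = ρ a + ρ a'
  map_smul : ∀ (c : ℂ) (a : A), ρ (c • a) = c • ρ a
  map_pos_matrix : ∀ (n : ℕ) (M : Matrix (Fin n) (Fin n) A),
    MatrixIsPositive M → MatrixIsPositive (M.map ρ)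

/-- A map between C*-algebras is strict if some approximate unit of the domain is
sent to a strictly Cauchy net in the multiplier algebra of the codomain. -/
def IsStrictMap {A B : Type u} [NonUnitalCStarAlgebra A] [NonUnitalCStarAlgebra B]
    (ρ : A → B) : Prop :=
  ∃ e : ℕ → A, IsApproxUnit e ∧
    ∀ b : B, CauchySeq (fun n => ρ (e n) * b) ∧ CauchySeq (fun n => b * ρ (e n))

/-- A completely positive map from `A` into the adjointable operators on a
right Hilbert `B`-module `X`. -/
structure IsCPAction {A B X : Type u} [NonUnitalCStarAlgebra A] [NonUnitalCStarAlgebra B]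
    [NormedAddCommGroup X] [NormedSpace ℂ X] [CompleteSpace X]
    (hX : HilbertModule B X) (ρ : A → X → X) : Prop where
  map_add : ∀ a a' x, ρ (a + a') x = ρ a x + ρ a' x
  map_smul : ∀ (c : ℂ) (a : A) x, ρ (c • a) x = c • ρ a x
  add_right : ∀ a x y, ρ a (x + y) = ρ a x + ρ a y
  adjointable : ∀ a, ∃ S, HilbertModule.IsAdjointPair hX hX (ρ a) S
  pos : ∀ (n : ℕ) (M : Matrix (Fin n) (Fin n) A), MatrixIsPositive M →
    ∀ x : Fin n → X, IsPositiveElem (∑ i, ∑ j, hX.inner (x i) (ρ (M i j) (x j)))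

/-- Strictness for a completely positive map into the adjointable operators on a
Hilbert module: some approximate unit is mapped to a strictly Cauchy net. -/
def IsStrictAction {A B X : Type u} [NonUnitalCStarAlgebra A] [NonUnitalCStarAlgebra B]
    [NormedAddCommGroup X] [NormedSpace ℂ X] [CompleteSpace X]
    (hX : HilbertModule B X) (ρ : A → X → X) : Prop :=
  ∃ e : ℕ → A, IsApproxUnit e ∧ ∃ S : ℕ → X → X,
    (∀ n, HilbertModule.IsAdjointPair hX hX (ρ (e n)) (S n)) ∧
    ∀ x, CauchySeq (fun n => ρ (e n) x) ∧ CauchySeq (fun n => S n x)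

/-- A left action of `A` on a Hilbert `B`-module by adjointable operators via a
*-homomorphism, i.e. the structure of an `A`–`B`-correspondence. -/
structure IsCorrespondenceAction {A B X : Type u} [NonUnitalCStarAlgebra A]
    [NonUnitalCStarAlgebra B]
    [NormedAddCommGroup X] [NormedSpace ℂ X] [CompleteSpace X]
    (hX : HilbertModule B X) (φ : A → X → X) : Prop where
  map_add : ∀ a a' x, φ (a + a') x = φ a x + φ a' x
  map_mul : ∀ a a' x, φ (a * a') x = φ a (φ a' x)
  map_smul : ∀ (c : ℂ) (a : A) x, φ (c • a) x = c • φ a x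
  add_right : ∀ a x y, φ a (x + y) = φ a x + φ a y
  star_adjoint : ∀ a, HilbertModule.IsAdjointPair hX hX (φ a) (φ (star a))

/-- The trivial right Hilbert `B`-module structure on `B` itself. -/
def trivHM (B : Type u) [NonUnitalCStarAlgebra B] : HilbertModule B B where
  smulR b c := b * c
  inner b c := star b * c
  smulR_add := by intros; simp [mul_add]
  add_smulR := by intros; simp [add_mul]
  smulR_mul := by intros; simp [mul_assoc]
  smulC_smulR := by intros; simp [smul_mul_assoc]
  inner_add_left := by intros; simp [star_add, add_mul]
  inner_add_right := by intros; simp [mul_add]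
  inner_smulR_right := by intros; simp [mul_assoc]
  inner_smulC_right := by intros; simp [mul_smul_comm]
  star_inner := by intros; simp [star_mul, mul_assoc]
  inner_self_pos := fun b => ⟨b, rfl⟩
  norm_inner_self := by intro b; rw [CStarRing.norm_star_mul_self, pow_two]

/-- `T` is "compact relative to the projection/identification `Q`": it can be
approximated in operator norm by finite sums of rank-one operators
`θ_{u,v} : z ↦ u⟨v, z⟩` with vectors in the image of `Q`.  With `Q = id` this
says `T ∈ K(X)`. -/
def IsCptOn {B X : Type u} [NonUnitalCStarAlgebra B]
    [NormedAddCommGroup X] [NormedSpace ℂ X] [CompleteSpace X]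
    (hX : HilbertModule B X) (Q : X → X) (T : X → X) : Prop :=
  ∀ ε : ℝ, 0 < ε → ∃ (n : ℕ) (u v : Fin n → X), ∀ z : X,
    ‖T (Q z) - ∑ i, hX.smulR (Q (u i)) (hX.inner (Q (v i)) (Q z))‖ ≤ ε * ‖Q z‖

/-- The interior (balanced) tensor product `X ⊗_B Y` of a right Hilbert
`B`-module `X` with a Hilbert `C`-module `Y` carrying a left `B`-action `actY`,
presented via the canonical bilinear map `mk2 : (x, y) ↦ x ⊗ y` with its
characteristic inner product identity and density of elementary tensors. -/
structure TensorData {B C X Y : Type u} [NonUnitalCStarAlgebra B] [NonUnitalCStarAlgebra C]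
    [NormedAddCommGroup X] [NormedSpace ℂ X] [CompleteSpace X]
    [NormedAddCommGroup Y] [NormedSpace ℂ Y] [CompleteSpace Y]
    (hX : HilbertModule B X) (hY : HilbertModule C Y) (actY : B → Y → Y)
    (T : Type u) [NormedAddCommGroup T] [NormedSpace ℂ T] [CompleteSpace T] :
    Type u where
  str : HilbertModule C T
  mk2 : X → Y → T
  mk2_add_left : ∀ x x' y, mk2 (x + x') y = mk2 x y + mk2 x' y
  mk2_add_right : ∀ x y y', mk2 x (y + y') = mk2 x y + mk2 x y'
  mk2_balanced : ∀ x b y, mk2 (hX.smulR x b) y = mk2 x (actY b y)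
  inner_mk2 : ∀ x₁ y₁ x₂ y₂,
    str.inner (mk2 x₁ y₁) (mk2 x₂ y₂) = hY.inner y₁ (actY (hX.inner x₁ x₂) y₂)
  dense : (Submodule.span ℂ (Set.range fun p : X × Y => mk2 p.1 p.2)).topologicalClosure = ⊤

/-- A `B`-C*-algebra structure on `C`: a nondegenerate *-homomorphism
`B → M(C)`, presented as a left action of `B` on `C` by adjointable right
`C`-module maps (i.e. multipliers). -/
structure IsMultiplierAction {B C : Type u} [NonUnitalCStarAlgebra B]
    [NonUnitalCStarAlgebra C] (actB : B → C → C) : Prop where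
  corr : IsCorrespondenceAction (trivHM C) actB
  mul_right : ∀ (b : B) (c c' : C), actB b (c * c') = actB b c * c'
  nondeg : (Submodule.span ℂ
    {x : C | ∃ (b : B) (c : C), x = actB b c}).topologicalClosure = ⊤

/-- Compact operators all of whose approximating rank-one vectors can be taken
in the subset `S` (e.g. `K(F ⊗_B I) ⊆ K(F ⊗_B C)` for `S = F ⊗_B I`). -/
def IsCptVecIn {C M : Type u} [NonUnitalCStarAlgebra C]
    [NormedAddCommGroup M] [NormedSpace ℂ M] [CompleteSpace M]
    (hM : HilbertModule C M) (S : Set M) (T : M → M) : Prop :=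
  ∀ ε : ℝ, 0 < ε → ∃ (n : ℕ) (ξ η : Fin n → M), (∀ i, ξ i ∈ S ∧ η i ∈ S) ∧
    ∀ z : M, ‖T z - ∑ i, hM.smulR (ξ i) (hM.inner (η i) z)‖ ≤ ε * ‖z‖

/-!
The map `f ⊗ c ↦ f ⊗ q c` satisfies `⟨Q m, Q m'⟩ = q ⟨m, m'⟩`, hence extends to a contraction
`Q : F ⊗_B C → F ⊗_B (C/I)`. For any such morphism of Hilbert modules, functional calculus on
`⟨m, m⟩` gives, for each `r > 0` with `‖Q m‖ ≤ r`, some `e ∈ ker q` with `‖m - m e‖ ≤ r`. Since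
`m e ∈ ker Q`, the norm of `Q m` is the distance of `m` to `ker Q`, the range of `Q` is closed, and
`ker Q` is the closure of its elements `m e`.

A C*-algebra is a Hilbert module over itself, so a *-homomorphism is a morphism as well and has
closed range. If `Q` is surjective, this applies to the *-homomorphism from the compact operators
of the first module to the adjointable operators of the second: its range contains all rank-one
operators, so every compact operator lifts. If `a` is compact and `Q a = 0`, then each
`a θ_{u,v} = θ_{a u,v}` is a limit of operators `θ_{(a u)e,v} = θ_{a u,v e*}` with both vectors
in `ker Q`; an approximate unit of the compact operators puts `a` itself in `K(ker Q)`.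
-/

open scoped CStarAlgebra

section ApproximateOperators

variable {𝕜 E G : Type*} [NontriviallyNormedField 𝕜] [SeminormedAddCommGroup E]
  [NormedSpace 𝕜 E] [NormedAddCommGroup G] [NormedSpace 𝕜 G]

lemma exists_mem_coe_eq_of_forall_approx {W : Set (E →L[𝕜] G)} (hW : IsComplete W)
    {T : E → G} (h : ∀ ε : ℝ, 0 < ε → ∃ a ∈ W, ∀ z, ‖T z - a z‖ ≤ ε * ‖z‖) :
    ∃ a ∈ W, T = a := by
  choose a haW haT using fun n : ℕ => h (1 / (n + 1)) Nat.one_div_pos_of_nat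
  have hdist : ∀ n m, n ≤ m → dist (a n) (a m) ≤ 2 * (1 / ((n : ℝ) + 1)) := by
    intro n m hnm
    rw [dist_eq_norm]
    refine ContinuousLinearMap.opNorm_le_bound _ (by positivity) fun z => ?_
    calc ‖(a n - a m) z‖ = ‖(T z - a m z) - (T z - a n z)‖ := by simp
      _ ≤ 1 / ((m : ℝ) + 1) * ‖z‖ + 1 / ((n : ℝ) + 1) * ‖z‖ :=
          (norm_sub_le _ _).trans (add_le_add (haT m z) (haT n z))
      _ ≤ 1 / ((n : ℝ) + 1) * ‖z‖ + 1 / ((n : ℝ) + 1) * ‖z‖ := by gcongr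
      _ = 2 * (1 / ((n : ℝ) + 1)) * ‖z‖ := by ring
  have htend := tendsto_one_div_add_atTop_nhds_zero_nat (𝕜 := ℝ)
  obtain ⟨b, hbW, hb⟩ := cauchySeq_tendsto_of_isComplete hW haW
    (cauchySeq_of_le_tendsto_0' _ hdist (by simpa using htend.const_mul 2))
  refine ⟨b, hbW, funext fun z => tendsto_nhds_unique (f := fun n => a n z) ?_
    (((ContinuousLinearMap.apply 𝕜 G z).continuous.tendsto b).comp hb)⟩
  refine tendsto_iff_norm_sub_tendsto_zero.2 (squeeze_zero (fun _ => norm_nonneg _)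
    (fun n => (norm_sub_rev _ _).trans_le (haT n z)) ?_)
  simpa using htend.mul_const ‖z‖

end ApproximateOperators

section Cutoff

variable {A A' : Type*} [NonUnitalCStarAlgebra A] [NonUnitalCStarAlgebra A']

lemma norm_sub_cfcₙ_conj_le {h : A} (hh : IsSelfAdjoint h) {f : ℝ → ℝ} (hf : Continuous f)
    (hf0 : f 0 = 0) {s : ℝ} (hs : ∀ t, |t * (1 - f t) ^ 2| ≤ s) :
    ‖h - h * cfcₙ f h - cfcₙ f h * h + cfcₙ f h * (h * cfcₙ f h)‖ ≤ s := by
  have hcfc : h - h * cfcₙ f h - cfcₙ f h * h + cfcₙ f h * (h * cfcₙ f h)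
      = cfcₙ (fun t => t - t * f t - f t * t + f t * (t * f t)) h := by
    rw [cfcₙ_add .., cfcₙ_sub .., cfcₙ_sub .., cfcₙ_mul f _ h, cfcₙ_mul f _ h, cfcₙ_mul _ f h,
      cfcₙ_id' ℝ h]
  rw [hcfc]
  refine norm_cfcₙ_le fun t _ => (congrArg _ ?_).trans_le (hs t)
  ring

lemma map_cfcₙ_eq_zero (φ : A →⋆ₙₐ[ℂ] A') {h : A} (hh : IsSelfAdjoint h)
    {f : ℝ → ℝ} (hf : Continuous f) (hf0 : ∀ t, |t| ≤ ‖φ h‖ → f t = 0) : φ (cfcₙ f h) = 0 := by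
  have hφh : IsSelfAdjoint (φ h) := hh.map φ
  rw [φ.map_cfcₙ (S := ℂ) f h hf.continuousOn (hf0 0 (by simp)) (map_continuous φ) hh hφh,
    cfcₙ_congr (g := fun _ => 0) fun t ht => hf0 t ?_, cfcₙ_const_zero]
  simpa [cfcₙ_id' ℝ (φ h)] using norm_apply_le_norm_cfcₙ (fun t : ℝ => t) (φ h) ht

lemma exists_cutoff_of_norm_map_le (φ : A →⋆ₙₐ[ℂ] A') {h : A} (hh : IsSelfAdjoint h) {s : ℝ}
    (hs : 0 < s) (hφ : ‖φ h‖ ≤ s) :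
    ∃ e : A, IsSelfAdjoint e ∧ φ e = 0 ∧ ‖h - h * e - e * h + e * (h * e)‖ ≤ s := by
  have hmax : ∀ t : ℝ, 0 < max |t| s := fun t => lt_max_of_lt_right hs
  -- Chosen so that `t * (1 - f t) ^ 2` is `t` truncated to `[-s, s]`.
  let f : ℝ → ℝ := fun t => 1 - √(s / max |t| s)
  have hf : Continuous f :=
    continuous_const.sub (Real.continuous_sqrt.comp
      (continuous_const.div (by fun_prop) fun t => (hmax t).ne'))
  have hf0 : ∀ t, |t| ≤ s → f t = 0 := fun t ht => by
    simp only [f, max_eq_right ht, div_self hs.ne', Real.sqrt_one, sub_self]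
  refine ⟨cfcₙ f h, cfcₙ_predicate f h,
    map_cfcₙ_eq_zero φ hh hf fun t ht => hf0 t (ht.trans hφ),
    norm_sub_cfcₙ_conj_le hh hf (hf0 0 (by simpa using hs.le)) fun t => ?_⟩
  have htrunc : (1 - f t) ^ 2 = s / max |t| s := by
    simp only [f, sub_sub_cancel, Real.sq_sqrt (div_nonneg hs.le (hmax t).le)]
  rw [htrunc, abs_mul, abs_of_pos (div_pos hs (hmax t)), ← mul_div_assoc, div_le_iff₀ (hmax t),
    mul_comm]
  gcongr
  exact le_max_left _ _

end Cutoff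

namespace HilbertModule

section Basic

variable {B X : Type u} [NonUnitalCStarAlgebra B] [NormedAddCommGroup X] [NormedSpace ℂ X]
  [CompleteSpace X] (hX : HilbertModule B X)

lemma inner_zero_right (x : X) : hX.inner x 0 = 0 := by
  simpa using hX.inner_add_right x 0 0

lemma inner_zero_left (x : X) : hX.inner 0 x = 0 := by
  simpa using hX.inner_add_left 0 0 x

lemma inner_sub_right (x y z : X) : hX.inner x (y - z) = hX.inner x y - hX.inner x z := by
  rw [eq_sub_iff_add_eq, ← hX.inner_add_right, sub_add_cancel]

lemma inner_sub_left (x y z : X) : hX.inner (x - y) z = hX.inner x z - hX.inner y z := by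
  rw [eq_sub_iff_add_eq, ← hX.inner_add_left, sub_add_cancel]

lemma inner_smulC_left (c : ℂ) (x y : X) : hX.inner (c • x) y = star c • hX.inner x y := by
  rw [← hX.star_inner y, hX.inner_smulC_right, star_smul, hX.star_inner]

lemma inner_smulR_left (x y : X) (b : B) :
    hX.inner (hX.smulR x b) y = star b * hX.inner x y := by
  rw [← hX.star_inner y, hX.inner_smulR_right, star_mul, hX.star_inner]

lemma inner_self_eq_zero {x : X} : hX.inner x x = 0 ↔ x = 0 := by
  rw [← norm_eq_zero, ← hX.norm_inner_self, sq_eq_zero_iff, norm_eq_zero]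

lemma eq_of_inner_eq_inner {x y : X} (hx : hX.inner x x = hX.inner x y)
    (hy : hX.inner y x = hX.inner y y) : x = y := by
  rw [← sub_eq_zero, ← hX.inner_self_eq_zero, hX.inner_sub_right, hX.inner_sub_left,
    hX.inner_sub_left, hx, hy, sub_self]

lemma ext_inner {x y : X} (h : ∀ w, hX.inner w x = hX.inner w y) : x = y :=
  hX.eq_of_inner_eq_inner (h x) (h y)

lemma smulR_zero (x : X) : hX.smulR x 0 = 0 := by
  simpa using hX.smulR_add x 0 0

lemma zero_smulR (b : B) : hX.smulR 0 b = 0 := by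
  simpa using hX.add_smulR 0 0 b

lemma isSelfAdjoint_inner_self (x : X) : IsSelfAdjoint (hX.inner x x) := hX.star_inner x x

/-- A right Hilbert `B`-module as a `CStarModule` over `Bᵐᵒᵖ`, Mathlib's `CStarModule` being
a left module. -/
abbrev toCStarModule [PartialOrder Bᵐᵒᵖ] [StarOrderedRing Bᵐᵒᵖ] :
    letI : SMul Bᵐᵒᵖ X := ⟨fun b x => hX.smulR x b.unop⟩
    CStarModule Bᵐᵒᵖ X :=
  letI : SMul Bᵐᵒᵖ X := ⟨fun b x => hX.smulR x b.unop⟩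
  { inner x y := .op (hX.inner x y)
    inner_add_right := congrArg _ (hX.inner_add_right ..)
    inner_self_nonneg {x} := by
      obtain ⟨b, hb⟩ := hX.inner_self_pos x
      rw [hb]
      exact mul_star_self_nonneg (MulOpposite.op b)
    inner_self := (MulOpposite.op_eq_zero_iff _).trans hX.inner_self_eq_zero
    inner_op_smul_right := congrArg _ (hX.inner_smulR_right ..)
    inner_smul_right_complex := congrArg _ (hX.inner_smulC_right ..)
    star_inner x y := congrArg _ (hX.star_inner x y)
    norm_eq_sqrt_norm_inner_self x := by
      rw [MulOpposite.norm_op, ← hX.norm_inner_self, Real.sqrt_sq (norm_nonneg x)] }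

lemma norm_inner_le (x y : X) : ‖hX.inner x y‖ ≤ ‖x‖ * ‖y‖ := by
  let _ : PartialOrder Bᵐᵒᵖ := CStarAlgebra.spectralOrder Bᵐᵒᵖ
  have _ : StarOrderedRing Bᵐᵒᵖ := CStarAlgebra.spectralOrderedRing Bᵐᵒᵖ
  let _ : SMul Bᵐᵒᵖ X := ⟨fun b x => hX.smulR x b.unop⟩
  let _ : CStarModule Bᵐᵒᵖ X := hX.toCStarModule
  exact CStarModule.norm_inner_le (A := Bᵐᵒᵖ) X

lemma norm_smulR_le (x : X) (b : B) : ‖hX.smulR x b‖ ≤ ‖x‖ * ‖b‖ := by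
  refine (pow_le_pow_iff_left₀ (norm_nonneg _) (by positivity) two_ne_zero).1 ?_
  calc ‖hX.smulR x b‖ ^ 2 = ‖star b * hX.inner x x * b‖ := by
        rw [hX.norm_inner_self, hX.inner_smulR_right, hX.inner_smulR_left]
    _ ≤ ‖star b‖ * ‖hX.inner x x‖ * ‖b‖ := norm_mul₃_le
    _ = (‖x‖ * ‖b‖) ^ 2 := by rw [norm_star, ← hX.norm_inner_self]; ring

/-- The inner product against `v`, as a continuous linear map. -/
def innerL (v : X) : X →L[ℂ] B :=
  LinearMap.mkContinuous
    { toFun := hX.inner v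
      map_add' := hX.inner_add_right v
      map_smul' c x := hX.inner_smulC_right c v x } ‖v‖ (hX.norm_inner_le v)

/-- Right multiplication by `b`, as a continuous linear map. -/
def mulRightL (b : B) : X →L[ℂ] X :=
  LinearMap.mkContinuous
    { toFun x := hX.smulR x b
      map_add' x y := hX.add_smulR x y b
      map_smul' c x := hX.smulC_smulR c x b } ‖b‖
    fun x => (hX.norm_smulR_le x b).trans_eq (mul_comm _ _)

lemma continuous_inner_right (x : X) : Continuous (hX.inner x) := (hX.innerL x).continuous

lemma continuous_inner_left (y : X) : Continuous fun x => hX.inner x y := by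
  simpa only [hX.star_inner] using (hX.continuous_inner_right y).star

end Basic

section AdjointPair

variable {B X Y : Type u} [NonUnitalCStarAlgebra B]
  [NormedAddCommGroup X] [NormedSpace ℂ X] [CompleteSpace X]
  [NormedAddCommGroup Y] [NormedSpace ℂ Y] [CompleteSpace Y]
  {hX : HilbertModule B X} {hY : HilbertModule B Y} {T : X → Y} {S : Y → X}

lemma IsAdjointPair.symm (h : hX.IsAdjointPair hY T S) : hY.IsAdjointPair hX S T :=
  fun y x => by rw [← hX.star_inner, ← h x y, hY.star_inner]

/-- An adjointable map is automatically linear and, by the closed graph theorem, bounded. -/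
def IsAdjointPair.toCLM (h : hX.IsAdjointPair hY T S) : X →L[ℂ] Y :=
  .ofSeqClosedGraph
    (g :=
      { toFun := T
        map_add' x x' := hY.ext_inner fun w => by
          simp only [hY.inner_add_right, ← h.symm w, hX.inner_add_right]
        map_smul' c x := hY.ext_inner fun w => by
          simp only [RingHom.id_apply, hY.inner_smulC_right, ← h.symm w, hX.inner_smulC_right] })
    fun u x y hu hTu => hY.ext_inner fun w =>
      tendsto_nhds_unique (((hY.continuous_inner_right w).tendsto y).comp hTu) <| by
        simpa only [Function.comp_def, LinearMap.coe_mk, AddHom.coe_mk, ← h.symm w] using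
          ((hX.continuous_inner_right (S w)).tendsto x).comp hu

lemma IsAdjointPair.map_smulR (h : hX.IsAdjointPair hY T S) (x : X) (b : B) :
    T (hX.smulR x b) = hY.smulR (T x) b :=
  hY.ext_inner fun w => by
    rw [← h.symm, hX.inner_smulR_right, h.symm, hY.inner_smulR_right]

end AdjointPair

section Adj

variable {B X : Type u} [NonUnitalCStarAlgebra B] [NormedAddCommGroup X] [NormedSpace ℂ X]
  [CompleteSpace X] (hX : HilbertModule B X)

/-- The algebra of adjointable operators on `X`. -/
def adjointable : Subalgebra ℂ (X →L[ℂ] X) where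
  carrier := {T | ∃ S, hX.IsAdjointPair hX T S}
  mul_mem' := by
    rintro T T' ⟨S, hS⟩ ⟨S', hS'⟩
    exact ⟨S' ∘ S, fun x y => (hS (T' x) y).trans (hS' x (S y))⟩
  add_mem' := by
    rintro T T' ⟨S, hS⟩ ⟨S', hS'⟩
    refine ⟨fun y => S y + S' y, fun x y => ?_⟩
    rw [_root_.add_apply, hX.inner_add_left, hX.inner_add_right, hS x y, hS' x y]
  algebraMap_mem' c := by
    refine ⟨fun y => star c • y, fun x y => ?_⟩
    simp [Algebra.algebraMap_eq_smul_one, hX.inner_smulC_left, hX.inner_smulC_right]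

/-- The C*-algebra of adjointable operators on `X`. -/
def Adj : Type u := hX.adjointable

variable {hX}

namespace Adj

instance : NormedRing hX.Adj := inferInstanceAs (NormedRing hX.adjointable)

instance : NormedAlgebra ℂ hX.Adj := inferInstanceAs (NormedAlgebra ℂ hX.adjointable)

instance : FunLike hX.Adj X X where
  coe a := a.1
  coe_injective _ _ h := Subtype.ext (DFunLike.coe_injective h)

instance : LinearMapClass hX.Adj ℂ X X where
  map_add a := a.1.map_add
  map_smulₛₗ a := a.1.map_smul

@[ext] lemma ext {a b : hX.Adj} (h : ∀ x, a x = b x) : a = b :=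
  DFunLike.ext a b h

/-- The adjointable operator given by an adjoint pair of functions. -/
def ofIsAdjointPair {T S : X → X} (h : hX.IsAdjointPair hX T S) : hX.Adj := ⟨h.toCLM, S, h⟩

instance : Star hX.Adj where
  star a := ofIsAdjointPair a.2.choose_spec.symm

lemma isAdjointPair (a : hX.Adj) : hX.IsAdjointPair hX a (star a : hX.Adj) := a.2.choose_spec

lemma star_eq_of_isAdjointPair {a b : hX.Adj} (h : hX.IsAdjointPair hX a b) : star a = b :=
  ext fun y => hX.ext_inner fun w => by rw [← h w y, a.isAdjointPair]

instance : StarRing hX.Adj where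
  star_involutive a := star_eq_of_isAdjointPair a.isAdjointPair.symm
  star_mul a b := star_eq_of_isAdjointPair fun x y =>
    (a.isAdjointPair (b x) y).trans (b.isAdjointPair x _)
  star_add a b := star_eq_of_isAdjointPair fun x y => by
    change hX.inner (a x + b x) y = hX.inner x (star a y + star b y)
    rw [hX.inner_add_left, hX.inner_add_right, a.isAdjointPair, b.isAdjointPair]

instance : StarModule ℂ hX.Adj where
  star_smul c a := star_eq_of_isAdjointPair fun x y => by
    change hX.inner (c • a x) y = hX.inner x (star c • star a y)
    rw [hX.inner_smulC_left, hX.inner_smulC_right, a.isAdjointPair]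

instance : CStarRing hX.Adj where
  norm_mul_self_le a := by
    rw [← pow_two]
    refine (Real.le_sqrt (norm_nonneg _) (norm_nonneg _)).1 ?_
    refine a.1.opNorm_le_bound (Real.sqrt_nonneg _) fun x => ?_
    refine (pow_le_pow_iff_left₀ (norm_nonneg _) (by positivity) two_ne_zero).1 ?_
    have hsq : √‖star a * a‖ ^ 2 = ‖star a * a‖ := Real.sq_sqrt (norm_nonneg _)
    calc ‖a x‖ ^ 2 = ‖hX.inner x ((star a * a) x)‖ := by
          rw [hX.norm_inner_self, a.isAdjointPair]; rfl
      _ ≤ ‖x‖ * (‖star a * a‖ * ‖x‖) :=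
          (hX.norm_inner_le _ _).trans (by gcongr; exact (star a * a).1.le_opNorm x)
      _ = (√‖star a * a‖ * ‖x‖) ^ 2 := by rw [mul_pow, hsq]; ring

instance : CompleteSpace hX.Adj := by
  refine Metric.complete_of_cauchySeq_tendsto fun u hu => ?_
  have htend {v : ℕ → hX.Adj} (hv : CauchySeq v) :
      ∃ T : X →L[ℂ] X, Tendsto (fun n => (v n).1) atTop (𝓝 T) :=
    cauchySeq_tendsto_of_complete (uniformContinuous_subtype_val.comp_cauchySeq hv)
  obtain ⟨T, hT⟩ := htend hu
  obtain ⟨S, hS⟩ := htend (star_isometry.uniformContinuous.comp_cauchySeq hu)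
  have hTS : hX.IsAdjointPair hX T S := fun x y => by
    have hTx := ((ContinuousLinearMap.apply ℂ X x).continuous.tendsto T).comp hT
    have hSy := ((ContinuousLinearMap.apply ℂ X y).continuous.tendsto S).comp hS
    refine tendsto_nhds_unique (((hX.continuous_inner_left y).tendsto _).comp hTx) ?_
    refine (((hX.continuous_inner_right x).tendsto _).comp hSy).congr fun n => ?_
    exact ((u n).isAdjointPair x y).symm
  exact ⟨⟨T, S, hTS⟩, tendsto_subtype_rng.2 hT⟩

instance : CStarAlgebra hX.Adj where

variable (hX) in
/-- The inclusion of the adjointable operators into the bounded ones. -/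
def toCLMₗᵢ : hX.Adj →ₗᵢ[ℂ] X →L[ℂ] X := hX.adjointable.toSubmodule.subtypeₗᵢ

end Adj

variable (hX) in
/-- The rank-one operator `z ↦ u⟨v, z⟩`, often written `θ_{u,v}`. -/
def rankOne (u v : X) : hX.Adj :=
  Adj.ofIsAdjointPair (T := fun z => hX.smulR u (hX.inner v z))
    (S := fun z => hX.smulR v (hX.inner u z)) fun x y => by
      rw [hX.inner_smulR_left, hX.star_inner, hX.inner_smulR_right]

@[simp] lemma rankOne_apply (u v z : X) : hX.rankOne u v z = hX.smulR u (hX.inner v z) := rfl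

lemma mul_rankOne (a : hX.Adj) (u v : X) : a * hX.rankOne u v = hX.rankOne (a u) v :=
  Adj.ext fun _ => a.isAdjointPair.map_smulR u _

lemma star_rankOne (u v : X) : star (hX.rankOne u v) = hX.rankOne v u :=
  Adj.star_eq_of_isAdjointPair fun x y => by
    simp only [rankOne_apply, hX.inner_smulR_left, hX.inner_smulR_right, hX.star_inner]

lemma rankOne_smulR_left (u v : X) (b : B) :
    hX.rankOne (hX.smulR u b) v = hX.rankOne u (hX.smulR v (star b)) :=
  Adj.ext fun z => by
    simp only [rankOne_apply, hX.inner_smulR_left, star_star, hX.smulR_mul]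

lemma rankOne_smulC_left (c : ℂ) (u v : X) : hX.rankOne (c • u) v = c • hX.rankOne u v :=
  Adj.ext fun _ => hX.smulC_smulR c u _

variable (hX) in
/-- The rank-one operator `rankOne u v` as a continuous linear function of `u`. -/
def rankOneL (v : X) : X →L[ℂ] hX.Adj :=
  LinearMap.mkContinuous
    { toFun u := hX.rankOne u v
      map_add' _ _ := Adj.ext fun _ => hX.add_smulR _ _ _
      map_smul' c u := rankOne_smulC_left c u v } ‖v‖ fun u =>
    ContinuousLinearMap.opNorm_le_bound _ (by positivity) fun z =>
      calc ‖hX.smulR u (hX.inner v z)‖ ≤ ‖u‖ * (‖v‖ * ‖z‖) :=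
            (hX.norm_smulR_le _ _).trans (by gcongr; exact hX.norm_inner_le v z)
        _ = ‖v‖ * ‖u‖ * ‖z‖ := by ring

variable (hX) in
/-- The closed linear span of the rank-one operators with vectors in `S`. For `S = ⊤` these are
the compact operators `K(X)`; for a Hilbert submodule `S` this is the copy of `K(S)` in `K(X)`. -/
def compacts (S : Submodule ℂ X) : Submodule ℂ hX.Adj :=
  (Submodule.span ℂ (Set.image2 hX.rankOne S S)).topologicalClosure

variable {S : Submodule ℂ X}

lemma rankOne_mem_compacts {u v : X} (hu : u ∈ S) (hv : v ∈ S) : hX.rankOne u v ∈ hX.compacts S :=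
  Submodule.le_topologicalClosure _ (Submodule.subset_span ⟨u, hu, v, hv, rfl⟩)

lemma isClosed_compacts (S : Submodule ℂ X) : IsClosed (hX.compacts S : Set hX.Adj) :=
  Submodule.isClosed_topologicalClosure _

lemma compacts_le {W : Submodule ℂ hX.Adj} (hW : IsClosed (W : Set hX.Adj))
    (h : ∀ u ∈ S, ∀ v ∈ S, hX.rankOne u v ∈ W) : hX.compacts S ≤ W :=
  Submodule.topologicalClosure_minimal _ (Submodule.span_le.2 (Set.image2_subset_iff.2 h)) hW

lemma compacts_le_comap {V : Type*} [NormedAddCommGroup V] [NormedSpace ℂ V]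
    (f : hX.Adj →L[ℂ] V) {W : Submodule ℂ V} (hW : IsClosed (W : Set V))
    (h : ∀ u ∈ S, ∀ v ∈ S, f (hX.rankOne u v) ∈ W) : hX.compacts S ≤ W.comap f.toLinearMap :=
  compacts_le (hW.preimage f.continuous) h

lemma mul_mem_compacts_left (b : hX.Adj) (hb : ∀ u ∈ S, b u ∈ S) {a : hX.Adj}
    (ha : a ∈ hX.compacts S) : b * a ∈ hX.compacts S :=
  compacts_le_comap (ContinuousLinearMap.mul ℂ hX.Adj b) (isClosed_compacts S)
    (fun u hu v hv => by
      rw [ContinuousLinearMap.mul_apply', mul_rankOne]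
      exact rankOne_mem_compacts (hb u hu) hv) ha

lemma star_mem_compacts {a : hX.Adj} (ha : a ∈ hX.compacts S) : star a ∈ hX.compacts S :=
  compacts_le (W := (hX.compacts S).comap (starLinearEquiv ℂ : hX.Adj ≃ₗ⋆[ℂ] hX.Adj).toLinearMap)
    ((isClosed_compacts S).preimage continuous_star)
    (fun u hu v hv => by
      change star (hX.rankOne u v) ∈ hX.compacts S
      rw [star_rankOne]
      exact rankOne_mem_compacts hv hu) ha

lemma mul_mem_compacts_right (b : hX.Adj) (hb : ∀ u ∈ S, (star b : hX.Adj) u ∈ S) {a : hX.Adj}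
    (ha : a ∈ hX.compacts S) : a * b ∈ hX.compacts S := by
  simpa using star_mem_compacts (mul_mem_compacts_left (star b) hb (star_mem_compacts ha))

variable (hX) in
/-- The C*-algebra `K(X)` of compact operators. -/
def compactAlgebra : NonUnitalStarSubalgebra ℂ hX.Adj where
  __ := hX.compacts ⊤
  mul_mem' {a _} _ hb := mul_mem_compacts_left (S := ⊤) a (fun _ _ => trivial) hb
  star_mem' := star_mem_compacts

instance : IsClosed (hX.compactAlgebra : Set hX.Adj) := isClosed_compacts ⊤

lemma exists_sum_of_mem_span_rankOne {a : hX.Adj}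
    (ha : a ∈ Submodule.span ℂ (Set.image2 hX.rankOne S S)) :
    ∃ (n : ℕ) (u v : Fin n → X), (∀ i, u i ∈ S ∧ v i ∈ S) ∧ a = ∑ i, hX.rankOne (u i) (v i) := by
  obtain ⟨n, c, g, rfl⟩ := Submodule.mem_span_set'.1 ha
  choose u hu v hv huv using fun i => (g i).2
  exact ⟨n, fun i => c i • u i, v, fun i => ⟨S.smul_mem _ (hu i), hv i⟩,
    by simp only [rankOne_smulC_left, huv]⟩

lemma sum_rankOne_apply {n : ℕ} (u v : Fin n → X) (z : X) :
    (∑ i, hX.rankOne (u i) (v i) : hX.Adj) z = ∑ i, hX.smulR (u i) (hX.inner (v i) z) := by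
  change Adj.toCLMₗᵢ hX _ z = _
  simp only [map_sum, sum_apply]
  rfl

lemma isCptVecIn_iff {T : X → X} : IsCptVecIn hX S T ↔ ∃ a ∈ hX.compacts S, T = a := by
  constructor
  · intro h
    have hcomplete : IsComplete (Adj.toCLMₗᵢ hX '' hX.compacts S) :=
      (LinearIsometry.isComplete_image_iff (Adj.toCLMₗᵢ hX)).2
        (isClosed_compacts S).isComplete
    obtain ⟨_, ⟨a, ha, rfl⟩, hT⟩ := exists_mem_coe_eq_of_forall_approx hcomplete fun ε hε => by
      obtain ⟨n, u, v, huv, hT⟩ := h ε hε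
      refine ⟨_, ⟨∑ i, hX.rankOne (u i) (v i), sum_mem fun i _ =>
        rankOne_mem_compacts (huv i).1 (huv i).2, rfl⟩, fun z => ?_⟩
      exact (congrArg (fun w => ‖T z - w‖) (sum_rankOne_apply u v z)).trans_le (hT z)
    exact ⟨a, ha, hT⟩
  · rintro ⟨a, ha, rfl⟩ ε hε
    obtain ⟨b, hb, hab⟩ := Metric.mem_closure_iff.1 ha ε hε
    obtain ⟨n, u, v, huv, rfl⟩ := exists_sum_of_mem_span_rankOne hb
    refine ⟨n, u, v, huv, fun z => ?_⟩
    rw [← sum_rankOne_apply]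
    refine ((a - ∑ i, hX.rankOne (u i) (v i)).1.le_opNorm z).trans ?_
    gcongr
    exact (dist_eq_norm a _).symm.trans_le hab.le

lemma isCptOn_id_iff {T : X → X} : IsCptOn hX id T ↔ ∃ a ∈ hX.compacts ⊤, T = a := by
  rw [← isCptVecIn_iff]
  simp [IsCptOn, IsCptVecIn]

end Adj

section Morphism

variable {C C' M N : Type u} [NonUnitalCStarAlgebra C] [NonUnitalCStarAlgebra C']
  [NormedAddCommGroup M] [NormedSpace ℂ M] [CompleteSpace M]
  [NormedAddCommGroup N] [NormedSpace ℂ N] [CompleteSpace N]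

/-- `Q : M → N` is a morphism of Hilbert modules over the *-homomorphism `q : C → C'` of their
coefficient algebras. -/
def IsMorphism (hM : HilbertModule C M) (hN : HilbertModule C' N) (q : C →⋆ₙₐ[ℂ] C')
    (Q : M →ₗ[ℂ] N) : Prop :=
  ∀ m m', hN.inner (Q m) (Q m') = q (hM.inner m m')

variable {hM : HilbertModule C M} {hN : HilbertModule C' N} {q : C →⋆ₙₐ[ℂ] C'}

lemma norm_le_of_inner_eq {m : M} {n : N} (h : hN.inner n n = q (hM.inner m m)) : ‖n‖ ≤ ‖m‖ := by
  refine (pow_le_pow_iff_left₀ (norm_nonneg _) (norm_nonneg _) two_ne_zero).1 ?_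
  rw [hN.norm_inner_self, h, hM.norm_inner_self]
  exact NonUnitalStarAlgHom.norm_apply_le q _

variable (q) in
lemma isMorphism_trivHM : IsMorphism (trivHM C) (trivHM C') q (q : C →ₗ[ℂ] C') := fun c c' => by
  simp [trivHM, map_star]

lemma inner_linearCombination_eq {ι : Type*} {g : ι → M} {g' : ι → N}
    (h : ∀ i j, hN.inner (g' i) (g' j) = q (hM.inner (g i) (g j))) (x y : ι →₀ ℂ) :
    hN.inner (Finsupp.linearCombination ℂ g' x) (Finsupp.linearCombination ℂ g' y) =
      q (hM.inner (Finsupp.linearCombination ℂ g x) (Finsupp.linearCombination ℂ g y)) := by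
  induction x using Finsupp.induction_linear with
  | zero => simp [hN.inner_zero_left, hM.inner_zero_left]
  | add x x' hx hx' => simp only [map_add, hN.inner_add_left, hM.inner_add_left, hx, hx']
  | single i a =>
    induction y using Finsupp.induction_linear with
    | zero => simp [hN.inner_zero_right, hM.inner_zero_right]
    | add y y' hy hy' => simp only [map_add, hN.inner_add_right, hM.inner_add_right, hy, hy']
    | single j b =>
      simp only [Finsupp.linearCombination_single, hN.inner_smulC_left, hN.inner_smulC_right,
        hM.inner_smulC_left, hM.inner_smulC_right, map_smul, h]

lemma exists_isMorphism_of_inner_eq {ι : Type*} {g : ι → M} {g' : ι → N}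
    (hg : (Submodule.span ℂ (Set.range g)).topologicalClosure = ⊤)
    (h : ∀ i j, hN.inner (g' i) (g' j) = q (hM.inner (g i) (g j))) :
    ∃ Q : M →ₗ[ℂ] N, IsMorphism hM hN q Q ∧ ∀ i, Q (g i) = g' i := by
  let L := Finsupp.linearCombination ℂ g
  let L' := Finsupp.linearCombination ℂ g'
  have hinner := inner_linearCombination_eq h
  have hdense : DenseRange L := by
    rw [DenseRange, ← LinearMap.coe_range, Finsupp.range_linearCombination]
    exact Submodule.dense_iff_topologicalClosure_eq_top.2 hg
  have hL : ∀ x, L'.extendOfNorm L (L x) = L' x := LinearMap.extendOfNorm_eq hdense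
    ⟨1, fun x => (one_mul ‖L x‖).symm ▸ norm_le_of_inner_eq (hinner x x)⟩
  refine ⟨(L'.extendOfNorm L).toLinearMap, fun m m' => ?_, fun i => by
    simpa [L, L'] using hL (Finsupp.single i 1)⟩
  refine hdense.induction_on m (isClosed_eq ((hN.continuous_inner_left _).comp
    (ContinuousLinearMap.continuous _))
    ((map_continuous q).comp (hM.continuous_inner_left _))) fun x => ?_
  refine hdense.induction_on m' (isClosed_eq ((hN.continuous_inner_right _).comp
    (ContinuousLinearMap.continuous _))
    ((map_continuous q).comp (hM.continuous_inner_right _))) fun y => ?_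
  change hN.inner (L'.extendOfNorm L (L x)) (L'.extendOfNorm L (L y)) = _
  rw [hL, hL]
  exact hinner x y

namespace IsMorphism

variable {Q : M →ₗ[ℂ] N} (hQ : IsMorphism hM hN q Q)

include hQ

lemma map_smulR (m : M) (c : C) : Q (hM.smulR m c) = hN.smulR (Q m) (q c) :=
  hN.eq_of_inner_eq_inner
    (by rw [hN.inner_smulR_right, hQ, hQ, hM.inner_smulR_right, map_mul])
    (by simp only [hN.inner_smulR_left, hN.inner_smulR_right, hQ _, hM.inner_smulR_right,
      map_mul])

lemma norm_apply_le (m : M) : ‖Q m‖ ≤ ‖m‖ := norm_le_of_inner_eq (hQ m m)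

lemma continuous : Continuous Q :=
  AddMonoidHomClass.continuous_of_bound Q 1 fun m => by simpa using hQ.norm_apply_le m

lemma isClosed_ker : IsClosed (LinearMap.ker Q : Set M) :=
  isClosed_singleton.preimage hQ.continuous

lemma map_smulR_eq_zero (m : M) {e : C} (he : q e = 0) : Q (hM.smulR m e) = 0 := by
  rw [hQ.map_smulR, he, hN.smulR_zero]

lemma exists_norm_sub_smulR_le (m : M) {r : ℝ} (hr : 0 < r) (hm : ‖Q m‖ ≤ r) :
    ∃ e, q e = 0 ∧ ‖m - hM.smulR m e‖ ≤ r := by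
  obtain ⟨e, he, hqe, hle⟩ := exists_cutoff_of_norm_map_le q (hM.isSelfAdjoint_inner_self m)
    (pow_pos hr 2) (by rw [← hQ, ← hN.norm_inner_self]; gcongr)
  refine ⟨e, hqe, (pow_le_pow_iff_left₀ (norm_nonneg _) hr.le two_ne_zero).1 ?_⟩
  refine (hM.norm_inner_self _).trans_le (le_of_eq_of_le (congrArg _ ?_) hle)
  simp only [hM.inner_sub_left, hM.inner_sub_right, hM.inner_smulR_left, hM.inner_smulR_right,
    he.star_eq]
  abel

lemma mem_of_smulR_mem {S : Set M} (hS : IsClosed S) {m : M} (hm : Q m = 0)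
    (h : ∀ e, q e = 0 → hM.smulR m e ∈ S) : m ∈ S := by
  refine hS.closure_subset (Metric.mem_closure_iff.2 fun ε hε => ?_)
  obtain ⟨e, he, hle⟩ := hQ.exists_norm_sub_smulR_le m (half_pos hε)
    (by rw [hm, norm_zero]; exact (half_pos hε).le)
  exact ⟨_, h e he, (dist_eq_norm _ _).trans_lt (hle.trans_lt (half_lt_self hε))⟩

lemma norm_apply_eq_infDist_ker (m : M) :
    ‖Q m‖ = Metric.infDist m (LinearMap.ker Q) := by
  refine le_antisymm ((Metric.le_infDist ⟨0, zero_mem _⟩).2 fun s (hs : Q s = 0) => ?_)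
    (le_of_forall_pos_le_add fun ε hε => ?_)
  · rw [dist_eq_norm, ← sub_zero (Q m), ← hs, ← map_sub]
    exact hQ.norm_apply_le _
  · obtain ⟨e, he, hle⟩ := hQ.exists_norm_sub_smulR_le m (r := ‖Q m‖ + ε) (by positivity)
      (le_add_of_nonneg_right hε.le)
    refine (Metric.infDist_le_dist_of_mem (y := hM.smulR m e) ?_).trans
      ((dist_eq_norm _ _).trans_le hle)
    exact hQ.map_smulR_eq_zero m he

lemma isClosed_range : IsClosed (Set.range Q) := by
  let L := (LinearMap.ker Q).liftQ Q le_rfl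
  have hL : Isometry L := AddMonoidHomClass.isometry_of_norm L fun x => by
    obtain ⟨m, rfl⟩ := Submodule.Quotient.mk_surjective _ x
    exact (hQ.norm_apply_eq_infDist_ker m).trans
      (QuotientAddGroup.norm_mk (S := (LinearMap.ker Q).toAddSubgroup) m).symm
  have hrange : Set.range L = Set.range Q :=
    ((Submodule.Quotient.mk_surjective _).range_comp L).symm
  exact hrange ▸ hL.isUniformInducing.isComplete_range.isClosed

lemma inner_map_adj (a : hM.Adj) (m m' : M) :
    hN.inner (Q m) (Q (a m')) = hN.inner (Q ((star a : hM.Adj) m)) (Q m') := by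
  rw [hQ, hQ, a.isAdjointPair.symm]

lemma map_adj_eq_of_map_eq (a : hM.Adj) {m m' : M} (h : Q m = Q m') : Q (a m) = Q (a m') :=
  hN.eq_of_inner_eq_inner (by rw [hQ.inner_map_adj, h, ← hQ.inner_map_adj])
    (by rw [hQ.inner_map_adj, h, ← hQ.inner_map_adj])

lemma map_adj_eq_zero (a : hM.Adj) {m : M} (h : Q m = 0) : Q (a m) = 0 := by
  simpa using hQ.map_adj_eq_of_map_eq a (h.trans (map_zero Q).symm)

lemma rankOne_mem_compacts_ker {u : M} (hu : Q u = 0) (v : M) :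
    hM.rankOne u v ∈ hM.compacts (LinearMap.ker Q) :=
  hQ.mem_of_smulR_mem (S := hM.rankOneL v ⁻¹' hM.compacts (LinearMap.ker Q))
    ((isClosed_compacts _).preimage (hM.rankOneL v).continuous) hu fun e he => by
      have he' : q (star e) = 0 := by rw [map_star, he, star_zero]
      change hM.rankOne (hM.smulR u e) v ∈ hM.compacts (LinearMap.ker Q)
      rw [rankOne_smulR_left]
      exact rankOne_mem_compacts hu (hQ.map_smulR_eq_zero v he')

lemma map_eq_zero_of_mem_compacts_ker {a : hM.Adj}
    (ha : a ∈ hM.compacts (LinearMap.ker Q)) (m : M) : Q (a m) = 0 :=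
  compacts_le_comap
    ((ContinuousLinearMap.apply ℂ M m).comp (Adj.toCLMₗᵢ hM).toContinuousLinearMap) hQ.isClosed_ker
    (fun u (hu : Q u = 0) v _ => by
      change Q (hM.smulR u (hM.inner v m)) = 0
      rw [hQ.map_smulR, hu, hN.zero_smulR]) ha

lemma mem_compacts_ker_of_map_eq_zero {a : hM.Adj} (ha : a ∈ hM.compacts ⊤)
    (h : ∀ m, Q (a m) = 0) : a ∈ hM.compacts (LinearMap.ker Q) := by
  let _ : PartialOrder hM.compactAlgebra := CStarAlgebra.spectralOrder _
  have _ : StarOrderedRing hM.compactAlgebra := CStarAlgebra.spectralOrderedRing _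
  have hmul (k : hM.compactAlgebra) : a * k ∈ hM.compacts (LinearMap.ker Q) :=
    compacts_le_comap (ContinuousLinearMap.mul ℂ hM.Adj a) (isClosed_compacts _)
      (fun u _ v _ => by
        rw [ContinuousLinearMap.mul_apply', mul_rankOne]
        exact hQ.rankOne_mem_compacts_ker (h u) v) k.2
  have htend := (CStarAlgebra.increasingApproximateUnit hM.compactAlgebra).tendsto_mul_left ⟨a, ha⟩
  exact (isClosed_compacts _).mem_of_tendsto ((continuous_subtype_val.tendsto _).comp htend)
    (.of_forall hmul)

lemma map_eq_zero_iff_isCptVecIn_ker {T : M → M} (hT : IsCptOn hM id T) :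
    (∀ m, Q (T m) = 0) ↔ IsCptVecIn hM (LinearMap.ker Q) T := by
  obtain ⟨a, ha, rfl⟩ := isCptOn_id_iff.1 hT
  refine ⟨fun h => isCptVecIn_iff.2 ⟨a, hQ.mem_compacts_ker_of_map_eq_zero ha h, rfl⟩, fun h => ?_⟩
  obtain ⟨b, hb, hab⟩ := isCptVecIn_iff.1 h
  exact hab ▸ hQ.map_eq_zero_of_mem_compacts_ker hb

lemma isCptVecIn_ker_comp {T S : M → M} (hT : IsCptOn hM id T)
    (hS : IsCptVecIn hM (LinearMap.ker Q) S) :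
    IsCptVecIn hM (LinearMap.ker Q) (T ∘ S) ∧
      IsCptVecIn hM (LinearMap.ker Q) (S ∘ T) := by
  obtain ⟨a, -, rfl⟩ := isCptOn_id_iff.1 hT
  obtain ⟨b, hb, rfl⟩ := isCptVecIn_iff.1 hS
  exact ⟨isCptVecIn_iff.2 ⟨a * b, mul_mem_compacts_left a (fun _ => hQ.map_adj_eq_zero a) hb, rfl⟩,
    isCptVecIn_iff.2
      ⟨b * a, mul_mem_compacts_right a (fun _ => hQ.map_adj_eq_zero (star a)) hb, rfl⟩⟩

variable (hsurj : Function.Surjective Q)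

lemma isAdjointPair_surjInv (a : hM.Adj) :
    hN.IsAdjointPair hN (fun y => Q (a (Function.surjInv hsurj y)))
      (fun y => Q ((star a : hM.Adj) (Function.surjInv hsurj y))) := fun y y' => by
  calc hN.inner (Q (a (Function.surjInv hsurj y))) y'
      = hN.inner (Q (a (Function.surjInv hsurj y))) (Q (Function.surjInv hsurj y')) := by
        rw [Function.surjInv_eq hsurj]
    _ = hN.inner (Q (Function.surjInv hsurj y)) (Q ((star a : hM.Adj) _)) := by
        rw [hQ.inner_map_adj, star_star]
    _ = hN.inner y (Q ((star a : hM.Adj) (Function.surjInv hsurj y'))) := by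
        rw [Function.surjInv_eq hsurj]

/-- The operator on `N` induced by an adjointable operator on `M` along a surjective morphism. -/
def mapAdj : hM.Adj →⋆ₙₐ[ℂ] hN.Adj where
  toFun a := .ofIsAdjointPair (hQ.isAdjointPair_surjInv hsurj a)
  map_smul' c _ := Adj.ext fun _ => map_smul Q c _
  map_zero' := Adj.ext fun _ => map_zero Q
  map_add' _ _ := Adj.ext fun _ => map_add Q _ _
  map_mul' a _ := Adj.ext fun _ =>
    hQ.map_adj_eq_of_map_eq a (Function.surjInv_eq hsurj _).symm
  map_star' a := (Adj.star_eq_of_isAdjointPair (hQ.isAdjointPair_surjInv hsurj a)).symm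

lemma mapAdj_apply (a : hM.Adj) (m : M) : hQ.mapAdj hsurj a (Q m) = Q (a m) :=
  hQ.map_adj_eq_of_map_eq a (Function.surjInv_eq hsurj _)

lemma mapAdj_rankOne (u v : M) :
    hQ.mapAdj hsurj (hM.rankOne u v) = hN.rankOne (Q u) (Q v) := by
  refine Adj.ext fun y => ?_
  obtain ⟨m, rfl⟩ := hsurj y
  rw [hQ.mapAdj_apply, rankOne_apply, rankOne_apply, hQ.map_smulR, hQ]

lemma mapAdj_mem_compacts {a : hM.Adj} (ha : a ∈ hM.compacts ⊤) :
    hQ.mapAdj hsurj a ∈ hN.compacts ⊤ :=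
  compacts_le (W := (hN.compacts ⊤).comap (hQ.mapAdj hsurj : hM.Adj →ₗ[ℂ] hN.Adj))
    ((isClosed_compacts ⊤).preimage (map_continuous (hQ.mapAdj hsurj)))
    (fun u _ v _ => by
      change hQ.mapAdj hsurj (hM.rankOne u v) ∈ hN.compacts ⊤
      rw [hQ.mapAdj_rankOne hsurj]
      exact rankOne_mem_compacts trivial trivial) ha

lemma exists_mapAdj_eq {b : hN.Adj} (hb : b ∈ hN.compacts ⊤) :
    ∃ a ∈ hM.compacts ⊤, hQ.mapAdj hsurj a = b := by
  let φ : hM.compactAlgebra →⋆ₙₐ[ℂ] hN.Adj :=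
    (hQ.mapAdj hsurj).comp (NonUnitalStarSubalgebraClass.subtype hM.compactAlgebra)
  have hle : hN.compacts ⊤ ≤ LinearMap.range (φ : hM.compactAlgebra →ₗ[ℂ] hN.Adj) :=
    compacts_le (isMorphism_trivHM φ).isClosed_range fun u' _ v' _ => by
      obtain ⟨u, rfl⟩ := hsurj u'
      obtain ⟨v, rfl⟩ := hsurj v'
      exact ⟨⟨hM.rankOne u v, rankOne_mem_compacts trivial trivial⟩, hQ.mapAdj_rankOne hsurj u v⟩
  obtain ⟨a, rfl⟩ := hle hb
  exact ⟨a, a.2, rfl⟩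

include hsurj

lemma exists_isCptOn_comp_eq {T : M → M} (hT : IsCptOn hM id T) :
    ∃ S : N → N, IsCptOn hN id S ∧ ∀ m, Q (T m) = S (Q m) := by
  obtain ⟨a, ha, rfl⟩ := isCptOn_id_iff.1 hT
  exact ⟨_, isCptOn_id_iff.2 ⟨_, hQ.mapAdj_mem_compacts hsurj ha, rfl⟩,
    fun m => (hQ.mapAdj_apply hsurj a m).symm⟩

lemma exists_isCptOn_lift {S : N → N} (hS : IsCptOn hN id S) :
    ∃ T : M → M, IsCptOn hM id T ∧ ∀ m, Q (T m) = S (Q m) := by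
  obtain ⟨b, hb, rfl⟩ := isCptOn_id_iff.1 hS
  obtain ⟨a, ha, rfl⟩ := hQ.exists_mapAdj_eq hsurj hb
  exact ⟨_, isCptOn_id_iff.2 ⟨a, ha, rfl⟩, fun m => (hQ.mapAdj_apply hsurj a m).symm⟩

end IsMorphism

end Morphism

end HilbertModule

namespace TensorData

open HilbertModule

variable {B C C' F Y Y' M N : Type u}
  [NonUnitalCStarAlgebra B] [NonUnitalCStarAlgebra C] [NonUnitalCStarAlgebra C']
  [NormedAddCommGroup F] [NormedSpace ℂ F] [CompleteSpace F]
  [NormedAddCommGroup Y] [NormedSpace ℂ Y] [CompleteSpace Y]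
  [NormedAddCommGroup Y'] [NormedSpace ℂ Y'] [CompleteSpace Y']
  [NormedAddCommGroup M] [NormedSpace ℂ M] [CompleteSpace M]
  [NormedAddCommGroup N] [NormedSpace ℂ N] [CompleteSpace N]
  {hF : HilbertModule B F} {hY : HilbertModule C Y} {hY' : HilbertModule C' Y'}
  {actY : B → Y → Y} {actY' : B → Y' → Y'}
  (TM : TensorData hF hY actY M) (TN : TensorData hF hY' actY' N)

lemma mk2_zero (f : F) : TM.mk2 f 0 = 0 := by
  simpa using TM.mk2_add_right f 0 0

lemma smulR_mk2 (hact : IsCorrespondenceAction hY actY) (f : F) (y : Y) (c : C) :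
    TM.str.smulR (TM.mk2 f y) c = TM.mk2 f (hY.smulR y c) :=
  TM.str.eq_of_inner_eq_inner
    (by simp only [TM.str.inner_smulR_left, TM.str.inner_smulR_right, TM.inner_mk2,
      (hact.star_adjoint _).map_smulR, hY.inner_smulR_right])
    (by simp only [TM.str.inner_smulR_right, TM.inner_mk2, (hact.star_adjoint _).map_smulR,
      hY.inner_smulR_right])

variable {q : C →⋆ₙₐ[ℂ] C'} {p : Y →ₗ[ℂ] Y'} {Q : M →ₗ[ℂ] N}

lemma exists_isMorphism_map_mk2 (hp : IsMorphism hY hY' q p)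
    (hcompat : ∀ b y, actY' b (p y) = p (actY b y)) :
    ∃ Q : M →ₗ[ℂ] N, IsMorphism TM.str TN.str q Q ∧ ∀ f y, Q (TM.mk2 f y) = TN.mk2 f (p y) := by
  obtain ⟨Q, hQ, hmk⟩ := exists_isMorphism_of_inner_eq (hM := TM.str) (hN := TN.str) (q := q)
    (g' := fun x : F × Y => TN.mk2 x.1 (p x.2)) TM.dense fun x x' => by
      rw [TM.inner_mk2, TN.inner_mk2, hcompat, hp]
  exact ⟨Q, hQ, fun f y => hmk (f, y)⟩

variable {TM TN} (hQ : IsMorphism TM.str TN.str q Q)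
  (hmk : ∀ f y, Q (TM.mk2 f y) = TN.mk2 f (p y))

include hQ hmk

lemma surjective_of_map_mk2 (hp : Function.Surjective p) : Function.Surjective Q := by
  refine LinearMap.range_eq_top.1 (top_le_iff.1 (TN.dense.ge.trans ?_))
  refine Submodule.topologicalClosure_minimal _ (Submodule.span_le.2 ?_) hQ.isClosed_range
  rintro _ ⟨⟨f, y'⟩, rfl⟩
  obtain ⟨y, rfl⟩ := hp y'
  exact ⟨_, hmk f y⟩

lemma closure_span_mk2_ker_eq_ker (hact : IsCorrespondenceAction hY actY)
    (hp : IsMorphism hY hY' q p) :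
    closure (Submodule.span ℂ {m | ∃ f y, p y = 0 ∧ m = TM.mk2 f y} : Set M) =
      LinearMap.ker Q := by
  refine Set.Subset.antisymm (closure_minimal (Submodule.span_le.2 ?_) hQ.isClosed_ker)
    fun m hm => hQ.mem_of_smulR_mem isClosed_closure hm fun e he => ?_
  · rintro _ ⟨f, y, hy, rfl⟩
    exact (hmk f y).trans (hy ▸ TN.mk2_zero f)
  · have hle : Submodule.span ℂ (Set.range fun x : F × Y => TM.mk2 x.1 x.2) ≤
        (Submodule.span ℂ {m | ∃ f y, p y = 0 ∧ m = TM.mk2 f y}).comap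
          (TM.str.mulRightL e).toLinearMap := by
      refine Submodule.span_le.2 ?_
      rintro _ ⟨⟨f, y⟩, rfl⟩
      exact Submodule.subset_span
        ⟨f, hY.smulR y e, hp.map_smulR_eq_zero y he, TM.smulR_mk2 hact f y e⟩
    exact map_mem_closure (f := TM.str.mulRightL e) (TM.str.mulRightL e).continuous
      (Submodule.dense_iff_topologicalClosure_eq_top.2 TM.dense m) hle

end TensorData

theorem compacts_of_quotient_general {B C C' F Y Y' MC MQ : Type u}
    [NonUnitalCStarAlgebra B] [NonUnitalCStarAlgebra C] [NonUnitalCStarAlgebra C']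
    [NormedAddCommGroup F] [NormedSpace ℂ F] [CompleteSpace F]
    [NormedAddCommGroup Y] [NormedSpace ℂ Y] [CompleteSpace Y]
    [NormedAddCommGroup Y'] [NormedSpace ℂ Y'] [CompleteSpace Y']
    [NormedAddCommGroup MC] [NormedSpace ℂ MC] [CompleteSpace MC]
    [NormedAddCommGroup MQ] [NormedSpace ℂ MQ] [CompleteSpace MQ]
    {hF : HilbertModule B F} {hY : HilbertModule C Y} {hY' : HilbertModule C' Y'}
    {actY : B → Y → Y} (hactY : IsCorrespondenceAction hY actY) {actY' : B → Y' → Y'}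
    {q : C →⋆ₙₐ[ℂ] C'} {p : Y →ₗ[ℂ] Y'} (hp : HilbertModule.IsMorphism hY hY' q p)
    (hsurj : Function.Surjective p) (hcompat : ∀ b y, actY' b (p y) = p (actY b y))
    (TC : TensorData hF hY actY MC) (TQ : TensorData hF hY' actY' MQ) :
    (∀ b y, p y = 0 → p (actY b y) = 0) ∧
    (letI SI : Set MC := closure (Submodule.span ℂ {m | ∃ f y, p y = 0 ∧ m = TC.mk2 f y} : Set MC)
    (∀ T S : MC → MC, IsCptOn TC.str id T → IsCptVecIn TC.str SI S →
      IsCptVecIn TC.str SI (fun z => T (S z)) ∧ IsCptVecIn TC.str SI (fun z => S (T z))) ∧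
    ∃ q2 : MC → MQ,
      (∀ m m' : MC, q2 (m + m') = q2 m + q2 m') ∧
      (∀ (z : ℂ) (m : MC), q2 (z • m) = z • q2 m) ∧
      (∀ f y, q2 (TC.mk2 f y) = TQ.mk2 f (p y)) ∧
      (∀ (m : MC) (c : C), q2 (TC.str.smulR m c) = TQ.str.smulR (q2 m) (q c)) ∧
      (∀ m : MC, ‖q2 m‖ = Metric.infDist m SI) ∧
      Function.Surjective q2 ∧
      (∀ T : MC → MC, IsCptOn TC.str id T →
        ((∀ m, q2 (T m) = 0) ↔ IsCptVecIn TC.str SI T)) ∧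
      (∀ T : MC → MC, IsCptOn TC.str id T →
        ∃ S : MQ → MQ, IsCptOn TQ.str id S ∧ ∀ m, q2 (T m) = S (q2 m)) ∧
      (∀ S : MQ → MQ, IsCptOn TQ.str id S →
        ∃ T : MC → MC, IsCptOn TC.str id T ∧ ∀ m, q2 (T m) = S (q2 m))) := by
  have hact_zero : ∀ b, actY b 0 = 0 := fun b => by simpa using hactY.add_right b 0 0
  obtain ⟨Q, hQ, hmk⟩ := TC.exists_isMorphism_map_mk2 TQ hp hcompat
  have hQsurj : Function.Surjective Q := TensorData.surjective_of_map_mk2 hQ hmk hsurj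
  rw [TensorData.closure_span_mk2_ker_eq_ker hQ hmk hactY hp]
  exact ⟨fun b y hy => by rw [← hcompat, hy, ← map_zero p, hcompat, hact_zero],
    fun T S hT hS => hQ.isCptVecIn_ker_comp hT hS,
    Q, map_add Q, map_smul Q, hmk, hQ.map_smulR, hQ.norm_apply_eq_infDist_ker, hQsurj,
    fun T hT => hQ.map_eq_zero_iff_isCptVecIn_ker hT,
    fun T hT => hQ.exists_isCptOn_comp_eq hQsurj hT,
    fun S hS => hQ.exists_isCptOn_lift hQsurj hS⟩

/-- Let `F` be a right Hilbert `B`-module, `C` a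
`B`-C*-algebra, and `I ⊴ C` a (closed, two-sided, star-closed) ideal.  Then `I`
is a `B`-C*-algebra, `K(F ⊗_B I)` is an ideal in `K(F ⊗_B C)`, and the quotient
`K(F ⊗_B C)/K(F ⊗_B I)` is isomorphic to `K(F ⊗_B (C/I))`; moreover
`(F ⊗_B C)/(F ⊗_B I) ≅ F ⊗_B (C/I)` as right `C/I`-Hilbert modules via
`f ⊗ c + F ⊗_B I ↦ f ⊗ (c + I)`. -/
theorem compacts_of_quotient {B C C' F MC MQ : Type u}
    [NonUnitalCStarAlgebra B] [NonUnitalCStarAlgebra C] [NonUnitalCStarAlgebra C']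
    [NormedAddCommGroup F] [NormedSpace ℂ F] [CompleteSpace F]
    [NormedAddCommGroup MC] [NormedSpace ℂ MC] [CompleteSpace MC]
    [NormedAddCommGroup MQ] [NormedSpace ℂ MQ] [CompleteSpace MQ]
    (hF : HilbertModule B F)
    (actB : B → C → C) (hactB : IsMultiplierAction actB)
    -- the ideal `I ⊴ C`, presented with its quotient map `q_C : C → C/I`
    (I : Set C) (hIclosed : IsClosed I)
    (hIadd : ∀ c c', c ∈ I → c' ∈ I → c + c' ∈ I)
    (hIsmul : ∀ (z : ℂ) c, c ∈ I → z • c ∈ I)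
    (hIstar : ∀ c, c ∈ I → star c ∈ I)
    (hIabsorb_l : ∀ c d, d ∈ I → c * d ∈ I)
    (hIabsorb_r : ∀ c d, d ∈ I → d * c ∈ I)
    (qC : C →⋆ₙₐ[ℂ] C') (hqC : Function.Surjective qC)
    (hker : ∀ c : C, qC c = 0 ↔ c ∈ I)
    -- the `B`-algebra structure on `C/I`
    (actB' : B → C' → C') (hactB' : IsMultiplierAction actB')
    (hcompat : ∀ (b : B) (c : C), actB' b (qC c) = qC (actB b c))
    -- `MC = F ⊗_B C` and `MQ = F ⊗_B (C/I)`
    (TC : TensorData hF (trivHM C) actB MC)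
    (TQ : TensorData hF (trivHM C') actB' MQ) :
    -- `I` is a `B`-C*-algebra (it is `B`-stable)
    (∀ (b : B) (c : C), c ∈ I → actB b c ∈ I) ∧
    -- with `SI = F ⊗_B I ⊆ F ⊗_B C`:
    (letI SI : Set MC :=
      closure (Submodule.span ℂ {m : MC | ∃ (f : F) (c : C), c ∈ I ∧ m = TC.mk2 f c} : Set MC)
    -- `K(F ⊗_B I)` is an ideal in `K(F ⊗_B C)`
    (∀ T S : MC → MC, IsCptOn TC.str id T → IsCptVecIn TC.str SI S →
      IsCptVecIn TC.str SI (fun z => T (S z)) ∧ IsCptVecIn TC.str SI (fun z => S (T z))) ∧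
    -- the quotient module map `q₂ : F ⊗_B C → F ⊗_B (C/I)`
    ∃ q2 : MC → MQ,
      (∀ m m' : MC, q2 (m + m') = q2 m + q2 m') ∧
      (∀ (z : ℂ) (m : MC), q2 (z • m) = z • q2 m) ∧
      (∀ (f : F) (c : C), q2 (TC.mk2 f c) = TQ.mk2 f (qC c)) ∧
      (∀ (m : MC) (c : C), q2 (TC.str.smulR m c) = TQ.str.smulR (q2 m) (qC c)) ∧
      -- `q₂` identifies `MQ` with the quotient `(F ⊗_B C)/(F ⊗_B I)` isometrically
      (∀ m : MC, ‖q2 m‖ = Metric.infDist m SI) ∧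
      Function.Surjective q2 ∧
      -- the quotient of the compacts is `K(F ⊗_B (C/I))`
      (∀ T : MC → MC, IsCptOn TC.str id T →
        ((∀ m, q2 (T m) = 0) ↔ IsCptVecIn TC.str SI T)) ∧
      (∀ T : MC → MC, IsCptOn TC.str id T →
        ∃ S : MQ → MQ, IsCptOn TQ.str id S ∧ ∀ m, q2 (T m) = S (q2 m)) ∧
      (∀ S : MQ → MQ, IsCptOn TQ.str id S →
        ∃ T : MC → MC, IsCptOn TC.str id T ∧ ∀ m, q2 (T m) = S (q2 m))) := by
  obtain rfl : I = {c | qC c = 0} := Set.ext fun c => (hker c).symm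
  exact compacts_of_quotient_general hactB.corr (HilbertModule.isMorphism_trivHM qC) hqC hcompat
    TC TQ
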